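/- arXiv:2105.14508 — 2 statements merged into one kernel-verified Lean document; each statement's English description precedes it below -/
import Mathlib

section
/- Let q be a prime power, let V be a set of points of the projective space PG(r,q) over GF(q) that spans PG(r,q), and let C(V) be an associated projective code. Then C(V) is a minimal code if and only if for every hyperplane Σ of PG(r,q) the points of Σ ∩ V span Σ. -/
/-- The codeword of the projective code associated to the projective system `V`
corresponding to the linear functional `f`: its coordinates are the evaluations
of `f` at the (fixed) representative vectors of the points of `V`. -/
noncomputable def cw {F W : Type*} [Field F] [AddCommGroup W] [Module F W]
    (V : Set (Projectivization F W)) (f : Module.Dual F W) : ↥V → F :=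
  fun P => f P.1.rep

/-- A nonzero codeword is minimal if every nonzero codeword whose support is contained
in its support is a scalar multiple of it. -/
def IsMinimalWord {F W : Type*} [Field F] [AddCommGroup W] [Module F W]
    (V : Set (Projectivization F W)) (f : Module.Dual F W) : Prop :=
  cw V f ≠ 0 ∧ ∀ g : Module.Dual F W, cw V g ≠ 0 →
    (∀ P : ↥V, cw V g P ≠ 0 → cw V f P ≠ 0) → ∃ a : F, cw V g = a • cw V f

/-- The projective code of `V` is a minimal code if all of its nonzero codewords
are minimal. -/
def IsMinimalCode {F W : Type*} [Field F] [AddCommGroup W] [Module F W]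
    (V : Set (Projectivization F W)) : Prop :=
  ∀ f : Module.Dual F W, cw V f ≠ 0 → IsMinimalWord V f

/-!
Let `Σ` be the hyperplane `f = 0`. The support of `g` is contained in that of `f` exactly when `g`
vanishes on `Σ ∩ V`, i.e. when `g` annihilates the span of `Σ ∩ V`. Since `V` spans, the codeword
of `g` is a multiple of that of `f` exactly when `g` is a multiple of `f`, i.e. when `g` annihilates
`ker f`. Hence `f` is minimal iff every functional annihilating the span of `Σ ∩ V` annihilates
`ker f`, which by duality means that `Σ ∩ V` spans `ker f`.
-/

/-- The span of the section `Σ ∩ V` of `V` by the hyperplane `Σ` with equation `f = 0`, as a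
subspace of the ambient vector space. For `f = 0` the section is all of `V`. -/
def sectionSpan {F W : Type*} [Field F] [AddCommGroup W] [Module F W]
    (V : Set (Projectivization F W)) (f : Module.Dual F W) : Submodule F W :=
  Submodule.span F (Projectivization.rep '' ({P | f P.rep = 0} ∩ V))

section

variable {F W : Type*} [Field F] [AddCommGroup W] [Module F W]

theorem mem_dualAnnihilator_iff_le_ker {S : Submodule F W} {g : Module.Dual F W} :
    g ∈ S.dualAnnihilator ↔ S ≤ LinearMap.ker g :=
  Submodule.mem_dualAnnihilator g

theorem dualAnnihilator_ker_eq_span_singleton (f : Module.Dual F W) :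
    (LinearMap.ker f).dualAnnihilator = Submodule.span F {f} := by
  apply le_antisymm
  · intro g hg
    have hker : ⨅ _ : Unit, LinearMap.ker f ≤ LinearMap.ker g := by
      rwa [iInf_const, ← mem_dualAnnihilator_iff_le_ker]
    simpa only [Set.range_const] using mem_span_of_iInf_ker_le_ker hker
  · rw [Submodule.span_singleton_le_iff_mem, mem_dualAnnihilator_iff_le_ker]

variable {V : Set (Projectivization F W)} {f g : Module.Dual F W}

theorem cw_injective (hV : Submodule.span F (Projectivization.rep '' V) = ⊤) :
    Function.Injective (cw V) := by
  intro f g hfg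
  apply LinearMap.ext_on hV
  rintro _ ⟨P, hP, rfl⟩
  exact congrFun hfg ⟨P, hP⟩

theorem cw_ne_zero_iff (hV : Submodule.span F (Projectivization.rep '' V) = ⊤) :
    cw V f ≠ 0 ↔ f ≠ 0 :=
  (cw_injective hV).ne_iff' rfl

theorem exists_cw_eq_smul_iff_mem_span_singleton
    (hV : Submodule.span F (Projectivization.rep '' V) = ⊤) :
    (∃ a : F, cw V g = a • cw V f) ↔ g ∈ Submodule.span F {f} := by
  have cw_eq_smul_iff (a : F) : cw V g = a • cw V f ↔ a • f = g :=
    ((cw_injective hV).eq_iff (b := a • f)).trans eq_comm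
  simp only [cw_eq_smul_iff, Submodule.mem_span_singleton]

theorem sectionSpan_le_iff {S : Submodule F W} :
    sectionSpan V f ≤ S ↔ ∀ P ∈ V, f P.rep = 0 → P.rep ∈ S := by
  simp only [sectionSpan, Submodule.span_le, Set.image_subset_iff]
  exact ⟨fun h P hPV hfP => h ⟨hfP, hPV⟩, fun h P hP => h P hP.2 hP.1⟩

theorem sectionSpan_le_ker : sectionSpan V f ≤ LinearMap.ker f :=
  sectionSpan_le_iff.mpr fun _ _ hfP => hfP

theorem cw_support_subset_iff_mem_dualAnnihilator :
    (∀ P : ↥V, cw V g P ≠ 0 → cw V f P ≠ 0) ↔ g ∈ (sectionSpan V f).dualAnnihilator := by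
  simp only [mem_dualAnnihilator_iff_le_ker, sectionSpan_le_iff, LinearMap.mem_ker, cw,
    not_imp_not, Subtype.forall, ne_eq]

theorem isMinimalWord_iff_sectionSpan_eq_ker
    (hV : Submodule.span F (Projectivization.rep '' V) = ⊤) (hf : f ≠ 0) :
    IsMinimalWord V f ↔ sectionSpan V f = LinearMap.ker f :=
  calc IsMinimalWord V f
      ↔ ∀ g ≠ 0, g ∈ (sectionSpan V f).dualAnnihilator → g ∈ Submodule.span F {f} := by
        simp only [IsMinimalWord, cw_ne_zero_iff hV, cw_support_subset_iff_mem_dualAnnihilator,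
          exists_cw_eq_smul_iff_mem_span_singleton hV, hf, ne_eq, not_false_eq_true, true_and]
    _ ↔ (sectionSpan V f).dualAnnihilator ≤ (LinearMap.ker f).dualAnnihilator := by
        rw [dualAnnihilator_ker_eq_span_singleton]
        refine ⟨fun h g hg => ?_, fun h g _ hg => h hg⟩
        obtain rfl | hg0 := eq_or_ne g 0
        exacts [zero_mem _, h g hg0 hg]
    _ ↔ LinearMap.ker f ≤ sectionSpan V f := Subspace.dualAnnihilator_le_dualAnnihilator_iff
    _ ↔ sectionSpan V f = LinearMap.ker f := sectionSpan_le_ker.ge_iff_eq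

theorem statement0_general (hV : Submodule.span F (Projectivization.rep '' V) = ⊤) :
    IsMinimalCode V ↔
      ∀ f : Module.Dual F W, f ≠ 0 →
        Submodule.span F (Projectivization.rep '' ({P | f P.rep = 0} ∩ V)) =
          LinearMap.ker f :=
  forall_congr' fun _ =>
    (imp_congr_left (cw_ne_zero_iff hV)).trans
      (forall_congr' (isMinimalWord_iff_sectionSpan_eq_ker hV))

end

/-- for a spanning set of points `V` of `PG(r,q)`, the projective code
`C(V)` is minimal iff for every hyperplane `Σ` (the zero locus of a nonzero functional
`f`) the points of `Σ ∩ V` span `Σ`. -/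
theorem statement0 (q r : ℕ) (hq : IsPrimePow q)
    (F : Type) [Field F] [Fintype F] (hF : Fintype.card F = q)
    (V : Set (Projectivization F (Fin (r + 1) → F)))
    (hV : Submodule.span F (Projectivization.rep '' V) = ⊤) :
    IsMinimalCode V ↔
      ∀ f : Module.Dual F (Fin (r + 1) → F), f ≠ 0 →
        Submodule.span F (Projectivization.rep '' ({P | f P.rep = 0} ∩ V)) =
          LinearMap.ker f :=
  statement0_general hV
end

section
/- Let q be an odd prime power and r ≥ 3 odd, and let B be the hypersurface of PG(r,q²) defined below with 4α^{q+1}+(β^q−β)² ≠ 0. Then |B| = q^{2r−1}+q^{r−1}+(q^{2(r−1)}−q²)/(q²−1)+1, and for every hyperplane Σ of PG(r,q²) the cardinality |B ∩ Σ| belongs to the set {n₁, n₂, n₃, n₄, n₅}, where n₁ = q²(q^{2(r−2)}−1)/(q²−1)+q^{r−1}+1, n₂ = q^{2r−3}−q^{r−2}+q^{r−3}+(q^{2(r−2)}−1)/(q²−1), n₃ = q^{2r−3}+(q^{2(r−2)}−q²)/(q²−1)+1, n₄ = q^{2r−3}+q^{r−1}−q^{r−2}+q^{r−3}+(q^{2(r−2)}−1)/(q²−1),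 and n₅ = q^{2r−3}+q^{r−1}+(q^{2(r−2)}−q²)/(q²−1)+1. -/
/-- The affine equation
`x_r^q − x_r + α^q(x₁^{2q}+⋯+x_{r−1}^{2q}) − α(x₁²+⋯+x_{r−1}²)
  = (β^q−β)(x₁^{q+1}+⋯+x_{r−1}^{q+1})`. -/
def affEq {F : Type*} [Field F] (q r : ℕ) (α β : F) (x : Fin (r + 1) → F) : Prop :=
  x (Fin.last r) ^ q - x (Fin.last r)
      + α ^ q * (∑ i : Fin (r + 1), if 1 ≤ i.1 ∧ i.1 < r then x i ^ (2 * q) else 0)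
      - α * (∑ i : Fin (r + 1), if 1 ≤ i.1 ∧ i.1 < r then x i ^ 2 else 0)
    = (β ^ q - β) * (∑ i : Fin (r + 1), if 1 ≤ i.1 ∧ i.1 < r then x i ^ (q + 1) else 0)

/-- The hypersurface `B` of `PG(r,q²)`: the affine points (X₀ ≠ 0) whose affine
coordinates satisfy `affEq`, together with the points at infinity (X₀ = 0)
satisfying `X₁² + ⋯ + X_{r−1}² = 0`. -/
noncomputable def Bset (F : Type*) [Field F] (q r : ℕ) (α β : F) :
    Set (Projectivization F (Fin (r + 1) → F)) :=
  {P | (P.rep 0 ≠ 0 ∧ affEq q r α β fun i => P.rep i / P.rep 0) ∨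
       (P.rep 0 = 0 ∧ (∑ i : Fin (r + 1), if 1 ≤ i.1 ∧ i.1 < r then P.rep i ^ 2 else 0) = 0)}

/-!
An affine point is determined by the middle coordinates `x₁, …, x_{r-1}` and `x_r`. If the
hyperplane is not parallel to the `x_r`-axis it eliminates `x_r`, and what is left is a level set of
an orthogonal sum of `r - 1` copies of the `ℤ`-quadratic map `Q x = (σ - 1)(α x² - β x σ(x))`, where
`σ` is the `q`-power map; the discriminant condition says that `Q` is nondegenerate. A Gauss sum
of a nondegenerate `Q` that is equivalent to `-Q` has square `|F|`, and `r - 1` is even, so the size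
of every level set is explicit and takes only two values. Hyperplanes parallel to the `x_r`-axis
meet the affine part in a cylinder with `q` points over each admissible `(x₁, …, x_{r-1})`.

The points at infinity form a cone over the quadric `∑ xᵢ² = 0`, which is handled by the same Gauss
sum argument because `-1` is a square in `GF(q²)`. Its hyperplane sections are counted by averaging
over the pencil of quadrics spanned by `∑ xᵢ²` and the hyperplane.
-/

section HyperbolicDouble

variable {R V A : Type*} [CommRing R] [AddCommGroup V] [Module R V] [AddCommGroup A] [Module R A]

/-- A nondegenerate quadratic map, with values in an arbitrary module, whose sign is reversed by
some permutation of its domain. Over a field the orthogonal sum of two copies of such a map is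
hyperbolic, so that the sum of an even number of copies has the Gauss sums of a hyperbolic form.
Nondegeneracy asks that all polar forms `Q.polarBilin x` with `x ≠ 0` be onto. -/
structure HasHyperbolicDouble (Q : QuadraticMap R V A) : Prop where
  surjective_polarBilin : ∀ x, x ≠ 0 → Function.Surjective (Q.polarBilin x)
  exists_map_eq_neg : ∃ e : V ≃ V, ∀ x, Q (e x) = -Q x

variable {Q : QuadraticMap R V A}

theorem sum_addChar_polar [Fintype V] [DecidableEq V] (hQ : HasHyperbolicDouble Q)
    {χ : AddChar A ℂ} (hχ : χ ≠ 0) (x : V) :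
    ∑ y, χ (QuadraticMap.polar Q x y) = if x = 0 then (Fintype.card V : ℂ) else 0 := by
  classical
  split_ifs with hx
  · simp [hx]
  let χx : AddChar V ℂ := χ.compAddMonoidHom (Q.polarBilin x).toAddMonoidHom
  have hχx : χx ≠ 0 := by
    rw [AddChar.ne_zero_iff] at hχ ⊢
    obtain ⟨a, ha⟩ := hχ
    obtain ⟨y, rfl⟩ := hQ.surjective_polarBilin x hx a
    exact ⟨y, ha⟩
  exact AddChar.sum_eq_zero_iff_ne_zero.mpr hχx

theorem sum_addChar_quadraticMap_sq [Fintype V] (hQ : HasHyperbolicDouble Q)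
    {χ : AddChar A ℂ} (hχ : χ ≠ 0) : (∑ x, χ (Q x)) ^ 2 = Fintype.card V := by
  classical
  obtain ⟨e, he⟩ := hQ.exists_map_eq_neg
  have hneg : ∑ x, χ (Q x) = ∑ y, χ (-Q y) := by
    simp_rw [← he]
    exact (e.sum_comp fun x => χ (Q x)).symm
  have hshift (y : V) : ∑ x, χ (Q x) = ∑ x, χ (Q (x + y)) :=
    (Equiv.sum_comp (Equiv.addRight y) fun x => χ (Q x)).symm
  have hpolar (x y : V) : χ (Q (x + y)) * χ (-Q y) = χ (Q x) * χ (QuadraticMap.polar Q x y) := by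
    rw [← AddChar.map_add_eq_mul, ← AddChar.map_add_eq_mul, QuadraticMap.map_add Q]
    congr 1
    abel
  calc (∑ x, χ (Q x)) ^ 2
      = ∑ y, (∑ x, χ (Q (x + y))) * χ (-Q y) := by
        rw [sq]
        nth_rw 2 [hneg]
        simp_rw [Finset.mul_sum, ← hshift]
    _ = ∑ x, χ (Q x) * ∑ y, χ (QuadraticMap.polar Q x y) := by
        simp_rw [Finset.sum_mul, hpolar, Finset.mul_sum]
        exact Finset.sum_comm
    _ = Fintype.card V := by
        simp [sum_addChar_polar hQ hχ]

theorem sum_addChar_sum_quadraticMap [Fintype V] (hQ : HasHyperbolicDouble Q)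
    {χ : AddChar A ℂ} (hχ : χ ≠ 0) (m : ℕ) :
    ∑ x : Fin (2 * m) → V, χ (∑ i, Q (x i)) = (Fintype.card V : ℂ) ^ m := by
  have hprod (x : Fin (2 * m) → V) : χ (∑ i, Q (x i)) = ∏ i, χ (Q (x i)) :=
    map_prod χ.toMonoidHom (fun i => Multiplicative.ofAdd (Q (x i))) _
  simp_rw [hprod]
  rw [← Fintype.sum_pow fun x => χ (Q x), pow_mul, sum_addChar_quadraticMap_sq hQ hχ]

theorem card_mul_card_fiber_eq_sum_addChar {X : Type*} [Fintype X] [Finite A] (f : X → A)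
    (c : A) : (Nat.card A : ℂ) * Nat.card {x // f x = c} =
      ∑ χ : AddChar A ℂ, ∑ x, χ (f x) * χ (-c) := by
  classical
  cases nonempty_fintype A
  simp_rw [← AddChar.map_add_eq_mul]
  rw [Finset.sum_comm]
  simp_rw [AddChar.sum_apply_eq_ite, ← sub_eq_add_neg, sub_eq_zero]
  rw [← Finset.sum_filter, Finset.sum_const, nsmul_eq_mul, mul_comm, Nat.card_eq_fintype_card,
    Nat.card_eq_fintype_card, Fintype.card_subtype]

theorem card_sum_quadraticMap_eq [Finite V] [Finite A] [DecidableEq A]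
    (hQ : HasHyperbolicDouble Q) (m : ℕ) (c : A) :
    (Nat.card A : ℤ) * Nat.card {x : Fin (2 * m) → V // ∑ i, Q (x i) = c} =
      Nat.card V ^ (2 * m) + Nat.card V ^ m * ((if c = 0 then (Nat.card A : ℤ) else 0) - 1) := by
  classical
  cases nonempty_fintype V
  cases nonempty_fintype A
  suffices h : (Nat.card A : ℂ) * Nat.card {x : Fin (2 * m) → V // ∑ i, Q (x i) = c} =
      Nat.card V ^ (2 * m) + Nat.card V ^ m * ((if c = 0 then (Nat.card A : ℂ) else 0) - 1) by
    exact_mod_cast h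
  have horth : ∑ χ : AddChar A ℂ, χ (-c) = if c = 0 then (Nat.card A : ℂ) else 0 := by
    simp [AddChar.sum_apply_eq_ite]
  rw [card_mul_card_fiber_eq_sum_addChar, ← horth]
  simp_rw [← Finset.sum_mul]
  rw [Fintype.sum_eq_add_sum_compl 0, Fintype.sum_eq_add_sum_compl 0 fun χ : AddChar A ℂ => χ (-c)]
  have hne (χ : AddChar A ℂ) (hχ : χ ∈ ({0} : Finset (AddChar A ℂ))ᶜ) :
      (∑ x : Fin (2 * m) → V, χ (∑ i, Q (x i))) * χ (-c) = (Nat.card V : ℂ) ^ m * χ (-c) := by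
    rw [sum_addChar_sum_quadraticMap hQ (by simpa using hχ), Nat.card_eq_fintype_card]
  rw [Finset.sum_congr rfl hne, ← Finset.mul_sum]
  simp

theorem card_sum_quadraticMap_add_polar_eq (m : ℕ) (y : Fin (2 * m) → V) (c : A) :
    Nat.card {x : Fin (2 * m) → V // ∑ i, (Q (x i) + QuadraticMap.polar Q (y i) (x i)) = c} =
      Nat.card {x : Fin (2 * m) → V // ∑ i, Q (x i) = c + ∑ i, Q (y i)} := by
  refine Nat.card_congr ((Equiv.addLeft y).subtypeEquiv fun x => ?_)
  simp only [Equiv.coe_addLeft, Pi.add_apply, QuadraticMap.map_add, Finset.sum_add_distrib]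
  rw [← add_right_inj (∑ i, Q (y i)), add_comm c]
  simp only [add_assoc]

end HyperbolicDouble

section Counting

theorem card_fiber_mul_card {G H : Type*} [AddGroup G] [AddGroup H] {f : G →+ H}
    (hf : Function.Surjective f) (c : H) : Nat.card {x // f x = c} * Nat.card H = Nat.card G := by
  obtain ⟨g, rfl⟩ := hf c
  have hker : Nat.card {x // f x = f g} = Nat.card f.ker :=
    Nat.card_congr <| (Equiv.subRight g).subtypeEquiv fun x => by
      simp [AddMonoidHom.mem_ker, sub_eq_zero]
  rw [hker, ← f.ker.card_mul_index, AddSubgroup.index_ker, AddMonoidHom.range_eq_top.mpr hf,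
    AddSubgroup.card_top]

theorem card_dotProduct_eq_mul_card {F ι : Type*} [Field F] [Fintype ι] {a : ι → F}
    (ha : a ≠ 0) (c : F) :
    Nat.card {x : ι → F // a ⬝ᵥ x = c} * Nat.card F = Nat.card F ^ Fintype.card ι := by
  classical
  have hsurj : Function.Surjective (dotProductEquiv F ι a) :=
    LinearMap.surjective <| by simpa using ha
  rw [← Nat.card_eq_fintype_card (α := ι), ← Nat.card_fun]
  exact card_fiber_mul_card (f := (dotProductEquiv F ι a).toAddMonoidHom) hsurj c

theorem sum_card_pencil {F X : Type*} [Field F] [Fintype F] [Finite X] (f g : X → F) :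
    ∑ t : F, Nat.card {x // f x + t * g x = 0} + Nat.card {x // g x = 0} =
      Nat.card X + Nat.card F * Nat.card {x // f x = 0 ∧ g x = 0} := by
  classical
  cases nonempty_fintype X
  simp only [Nat.card_eq_fintype_card, Fintype.card_subtype, Finset.card_filter,
    Fintype.card_eq_sum_ones (α := X), Finset.mul_sum]
  rw [Finset.sum_comm, ← Finset.sum_add_distrib, ← Finset.sum_add_distrib]
  refine Finset.sum_congr rfl fun x _ => ?_
  by_cases hg : g x = 0
  · simp [hg, add_comm]
  · have hsol (t : F) : f x + t * g x = 0 ↔ t = -f x / g x := by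
      rw [eq_div_iff hg, add_comm, eq_neg_iff_add_eq_zero]
    simp [hg, hsol]

theorem card_subtype_and_fst_add {X A : Type*} [AddGroup A] (P : X → Prop) (R : A → Prop)
    (h : X → A) : Nat.card {p : X × A // P p.1 ∧ R (p.2 + h p.1)} =
      Nat.card {x // P x} * Nat.card {z // R z} := by
  rw [← Nat.card_prod]
  exact Nat.card_congr
    { toFun := fun p => (⟨p.1.1, p.2.1⟩, ⟨p.1.2 + h p.1.1, p.2.2⟩)
      invFun := fun p => ⟨(p.1.1, p.2.1 - h p.1.1), p.1.2, by simpa using p.2.2⟩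
      left_inv := fun p => by simp
      right_inv := fun p => by simp }

theorem card_subtype_and_add_mul_eq_zero {X F : Type*} [Field F] (P : X × F → Prop) (h : X → F)
    {b : F} (hb : b ≠ 0) :
    Nat.card {p : X × F // P p ∧ h p.1 + b * p.2 = 0} = Nat.card {x // P (x, -h x / b)} := by
  have hsol (p : X × F) : h p.1 + b * p.2 = 0 ↔ (p.1, -h p.1 / b) = p := by
    rw [Prod.ext_iff, div_eq_iff hb, neg_eq_iff_add_eq_zero, mul_comm p.2]
    simp
  exact Nat.card_congr
    { toFun := fun p => ⟨p.1.1, by rw [(hsol p.1).mp p.2.2]; exact p.2.1⟩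
      invFun := fun x => ⟨(x.1, -h x.1 / b), x.2, (hsol _).mpr rfl⟩
      left_inv := fun p => Subtype.ext ((hsol p.1).mp p.2.2)
      right_inv := fun _ => rfl }

end Counting

section SumOfSquares

variable {F : Type*} [Field F]

theorem hasHyperbolicDouble_sq (h2 : (2 : F) ≠ 0) (hneg : IsSquare (-1 : F)) :
    HasHyperbolicDouble (QuadraticMap.sq : QuadraticForm F F) where
  surjective_polarBilin x hx b := by
    refine ⟨b / (2 * x), ?_⟩
    simp only [QuadraticMap.polarBilin_apply_apply, QuadraticMap.polar, QuadraticMap.sq_apply]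
    field_simp
    ring
  exists_map_eq_neg := by
    obtain ⟨i, hi⟩ := hneg
    have hi0 : i ≠ 0 := by
      rintro rfl
      simp at hi
    refine ⟨Equiv.mulLeft₀ i hi0, fun x => ?_⟩
    simp only [Equiv.mulLeft₀_apply, QuadraticMap.sq_apply]
    linear_combination -x ^ 2 * hi

variable [Finite F] (h2 : (2 : F) ≠ 0) (hneg : IsSquare (-1 : F))
include h2 hneg

theorem card_sum_sq_add_dotProduct_eq_zero [DecidableEq F] (m : ℕ) (a : Fin (2 * m) → F) :
    (Nat.card F : ℤ) * Nat.card {x : Fin (2 * m) → F // ∑ i, x i ^ 2 + a ⬝ᵥ x = 0} =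
      Nat.card F ^ (2 * m) +
        Nat.card F ^ m * ((if a ⬝ᵥ a = 0 then (Nat.card F : ℤ) else 0) - 1) := by
  let Q : QuadraticForm F F := QuadraticMap.sq
  let y : Fin (2 * m) → F := fun i => a i / 2
  have hsplit (x : Fin (2 * m) → F) : ∑ i, x i ^ 2 + a ⬝ᵥ x =
      ∑ i, (Q (x i) + QuadraticMap.polar Q (y i) (x i)) := by
    rw [dotProduct, ← Finset.sum_add_distrib]
    refine Finset.sum_congr rfl fun i _ => ?_
    simp only [QuadraticMap.polar, QuadraticMap.sq_apply, Q, y]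
    field_simp
    ring
  have hconst : 0 + ∑ i, Q (y i) = 0 ↔ a ⬝ᵥ a = 0 := by
    have h : a ⬝ᵥ a = 2 * 2 * ∑ i, Q (y i) := by
      rw [dotProduct, Finset.mul_sum]
      refine Finset.sum_congr rfl fun i _ => ?_
      change a i * a i = 2 * 2 * (a i / 2 * (a i / 2))
      field_simp
    rw [zero_add, h, mul_eq_zero_iff_left (mul_ne_zero h2 h2)]
  have hcard := card_sum_quadraticMap_eq (hasHyperbolicDouble_sq h2 hneg) m (0 + ∑ i, Q (y i))
  rw [← card_sum_quadraticMap_add_polar_eq] at hcard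
  simpa only [hsplit, hconst] using hcard

theorem card_sum_sq_eq_zero (m : ℕ) :
    Nat.card {x : Fin (2 * (m + 1)) → F // ∑ i, x i ^ 2 = 0} =
      Nat.card F ^ (2 * m + 1) + (Nat.card F - 1) * Nat.card F ^ m := by
  classical
  have hF : (Nat.card F : ℤ) ≠ 0 := mod_cast Nat.card_pos.ne'
  have h := card_sum_sq_add_dotProduct_eq_zero h2 hneg (m + 1) 0
  simp only [zero_dotProduct, add_zero, if_true] at h
  zify [Nat.card_pos (α := F)]
  refine mul_left_cancel₀ hF ?_
  linear_combination h

theorem card_sum_sq_eq_zero_and_dotProduct_eq_zero [DecidableEq F] {m : ℕ}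
    {a : Fin (2 * (m + 1)) → F} (ha : a ≠ 0) :
    Nat.card {x : Fin (2 * (m + 1)) → F // ∑ i, x i ^ 2 = 0 ∧ a ⬝ᵥ x = 0} =
      Nat.card F ^ (2 * m) + (Nat.card F - 1) * if a ⬝ᵥ a = 0 then Nat.card F ^ m else 0 := by
  cases nonempty_fintype F
  have hF : (Nat.card F : ℤ) ≠ 0 := mod_cast Nat.card_pos.ne'
  have hpencil := sum_card_pencil (fun x : Fin (2 * (m + 1)) → F => ∑ i, x i ^ 2) (a ⬝ᵥ ·)
  have hlin := card_dotProduct_eq_mul_card ha 0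
  have hsum : (Nat.card F : ℤ) *
      ∑ t : F, (Nat.card {x : Fin (2 * (m + 1)) → F // ∑ i, x i ^ 2 + t * a ⬝ᵥ x = 0} : ℤ) =
      ∑ t : F, ((Nat.card F : ℤ) ^ (2 * (m + 1)) +
        Nat.card F ^ (m + 1) * ((if a ⬝ᵥ a = 0 ∨ t = 0 then (Nat.card F : ℤ) else 0) - 1)) := by
    rw [Finset.mul_sum]
    refine Finset.sum_congr rfl fun t _ => ?_
    simpa [or_comm] using card_sum_sq_add_dotProduct_eq_zero h2 hneg (m + 1) (t • a)
  rw [Nat.card_fun, Nat.card_eq_fintype_card (α := Fin _), Fintype.card_fin] at hpencil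
  rw [Fintype.card_fin] at hlin
  zify [Nat.card_pos (α := F)] at hpencil hlin ⊢
  refine mul_left_cancel₀ (pow_ne_zero 2 hF) ?_
  split_ifs with h
  · simp only [h, true_or, if_true, Finset.sum_const, Finset.card_univ,
      ← Nat.card_eq_fintype_card, nsmul_eq_mul] at hsum
    linear_combination hsum + hlin - Nat.card F * hpencil
  · simp only [h, false_or, Finset.sum_add_distrib, ← Finset.mul_sum, Finset.sum_sub_distrib,
      Finset.sum_ite_eq', Finset.mem_univ, if_true, Finset.sum_const, Finset.card_univ,
      ← Nat.card_eq_fintype_card, nsmul_eq_mul] at hsum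
    linear_combination hsum + hlin - Nat.card F * hpencil

end SumOfSquares

theorem exists_sq_sub_mul_sq_eq {K : Type*} [Field K] [Finite K] (h2 : (2 : K) ≠ 0) {d : K}
    (hd : d ≠ 0) (b : K) : ∃ x y : K, x ^ 2 - d * y ^ 2 = b := by
  cases nonempty_fintype K
  have hchar : ringChar K ≠ 2 := fun h => h2 <| mod_cast (ringChar.spec K 2).mpr h.dvd
  obtain ⟨x, y, hxy⟩ := FiniteField.exists_root_sum_quadratic
    (Polynomial.degree_X_pow_sub_C two_pos b)
    (Polynomial.degree_C_mul_X_pow 2 (neg_ne_zero.mpr hd))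
    (FiniteField.odd_card_of_char_ne_two hchar)
  simp only [Polynomial.eval_sub, Polynomial.eval_mul, Polynomial.eval_pow, Polynomial.eval_X,
    Polynomial.eval_C] at hxy
  exact ⟨x, y, by linear_combination hxy⟩

section SkewForm

variable {F : Type*} [Field F] (σ : F →+* F)

/-- The additive map `z ↦ σ z - z`. For an involution `σ` its kernel is the fixed field and its
values are skew; the affine equation of the hypersurface says that a certain function lies in this
kernel. -/
def skewDiff : F →+ F :=
  σ.toAddMonoidHom - AddMonoidHom.id F

@[simp]
theorem skewDiff_apply (z : F) : skewDiff σ z = σ z - z :=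
  rfl

variable {σ}

theorem mem_range_skewDiff_iff (hσ : Function.Involutive σ) (h2 : (2 : F) ≠ 0) {w : F} :
    w ∈ (skewDiff σ).range ↔ σ w = -w := by
  constructor
  · rintro ⟨z, rfl⟩
    simp [hσ z]
  · intro hw
    refine ⟨-w / 2, ?_⟩
    simp only [skewDiff_apply, map_div₀, map_neg, hw, map_ofNat]
    field_simp
    ring

theorem card_ker_skewDiff (hσ : Function.Involutive σ) (h2 : (2 : F) ≠ 0)
    (hne : σ ≠ RingHom.id F) : Nat.card (skewDiff σ).ker = Nat.card (skewDiff σ).range := by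
  obtain ⟨z, hz⟩ : ∃ z, σ z - z ≠ 0 := by
    by_contra! h
    exact hne (RingHom.ext fun z => sub_eq_zero.mp (h z))
  have hskew : σ (σ z - z) = -(σ z - z) := by simp [hσ z]
  refine Nat.card_congr ((Equiv.mulLeft₀ _ hz).subtypeEquiv fun x => ?_)
  rw [mem_range_skewDiff_iff hσ h2, AddMonoidHom.mem_ker, skewDiff_apply, Equiv.mulLeft₀_apply,
    map_mul, hskew, neg_mul, neg_inj, mul_right_inj' hz, sub_eq_zero]

theorem card_range_skewDiff_sq (hσ : Function.Involutive σ) (h2 : (2 : F) ≠ 0)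
    (hne : σ ≠ RingHom.id F) : Nat.card (skewDiff σ).range ^ 2 = Nat.card F := by
  rw [← (skewDiff σ).ker.card_mul_index, AddSubgroup.index_ker, card_ker_skewDiff hσ h2 hne, sq]

theorem card_ker_skewDiff_of_card_eq_sq (hσ : Function.Involutive σ) (h2 : (2 : F) ≠ 0)
    (hne : σ ≠ RingHom.id F) {q : ℕ} (hF : Nat.card F = q ^ 2) :
    Nat.card (skewDiff σ).ker = q := by
  rw [card_ker_skewDiff hσ h2 hne]
  exact Nat.pow_left_injective two_ne_zero ((card_range_skewDiff_sq hσ h2 hne).trans hF)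

variable (σ) in
/-- The quadratic map `x ↦ (σ - 1)(α x² - β x σ(x))`, with values in the image of `σ - 1`: the
contribution of one coordinate to the affine equation of the hypersurface. It is quadratic only
over the fixed field of `σ`; its additive structure is all that is needed here, hence the scalars
`ℤ`. -/
def skewForm (α β : F) : QuadraticMap ℤ F (skewDiff σ).range :=
  LinearMap.BilinMap.toQuadraticMap <| LinearMap.mk₂ ℤ
    (fun x y => (skewDiff σ).rangeRestrict (α * x * y - β * x * σ y))
    (fun x x' y => by rw [← map_add]; congr 1; ring)
    (fun n x y => by rw [← map_zsmul]; congr 1; simp only [zsmul_eq_mul]; ring)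
    (fun x y y' => by rw [← map_add]; congr 1; rw [map_add]; ring)
    (fun n x y => by
      rw [← map_zsmul]; congr 1; simp only [zsmul_eq_mul, map_mul, map_intCast]; ring)

@[simp]
theorem skewForm_apply (α β x : F) :
    skewForm σ α β x = (skewDiff σ).rangeRestrict (α * x ^ 2 - β * (x * σ x)) := by
  change (skewDiff σ).rangeRestrict (α * x * x - β * x * σ x) = _
  congr 1
  ring

/-- The additive endomorphism through which the polar form of `skewForm σ α β` factors. -/
def skewFormGradient (σ : F →+* F) (α β : F) : F →+ F :=
  AddMonoidHom.mulLeft (2 * α) + (AddMonoidHom.mulLeft (σ β - β)).comp σ.toAddMonoidHom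

@[simp]
theorem skewFormGradient_apply (α β x : F) :
    skewFormGradient σ α β x = 2 * α * x + (σ β - β) * σ x :=
  rfl

theorem polar_skewForm (hσ : Function.Involutive σ) (α β x y : F) :
    QuadraticMap.polar (skewForm σ α β) x y =
      (skewDiff σ).rangeRestrict (skewFormGradient σ α β x * y) := by
  refine Subtype.ext ?_
  simp only [QuadraticMap.polar, AddSubgroup.coe_sub, skewForm_apply, skewFormGradient_apply,
    AddMonoidHom.coe_rangeRestrict, skewDiff_apply, map_sub, map_add, map_mul, map_pow,
    map_ofNat, hσ _]
  ring

theorem injective_skewFormGradient (hσ : Function.Involutive σ) {α β : F}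
    (hΔ : 4 * (α * σ α) + (σ β - β) ^ 2 ≠ 0) : Function.Injective (skewFormGradient σ α β) := by
  refine (injective_iff_map_eq_zero _).mpr fun x hx => ?_
  rw [skewFormGradient_apply] at hx
  have hσx : 2 * σ α * σ x + (β - σ β) * x = 0 := by
    simpa only [map_add, map_mul, map_sub, map_ofNat, map_zero, hσ _] using congrArg σ hx
  refine (mul_eq_zero.mp ?_).resolve_left hΔ
  linear_combination 2 * σ α * hx - (σ β - β) * hσx

theorem exists_skewForm_eq_neg [Finite F] (hσ : Function.Involutive σ) (h2 : (2 : F) ≠ 0)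
    {α β : F} (hΔ : 4 * (α * σ α) + (σ β - β) ^ 2 ≠ 0) :
    ∃ e : F ≃ F, ∀ x, skewForm σ α β (e x) = -skewForm σ α β x := by
  let K := RingHom.eqLocusField σ (RingHom.id F)
  let d : K := ⟨4 * (α * σ α) + (σ β - β) ^ 2, by
    change σ (4 * (α * σ α) + (σ β - β) ^ 2) = 4 * (α * σ α) + (σ β - β) ^ 2
    simp only [map_add, map_mul, map_sub, map_pow, map_ofNat, hσ _]
    ring⟩
  have h2K : (2 : K) ≠ 0 := fun h => h2 (congrArg Subtype.val h)
  have hd : d ≠ 0 := fun h => hΔ (congrArg Subtype.val h)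
  obtain ⟨⟨p, hp⟩, ⟨s, hs⟩, hps⟩ := exists_sq_sub_mul_sq_eq h2K hd (-1)
  replace hp : σ p = p := hp
  replace hs : σ s = s := hs
  replace hps : p ^ 2 - (4 * (α * σ α) + (σ β - β) ^ 2) * s ^ 2 = -1 := congrArg Subtype.val hps
  -- `N x = 2 σ(α) σ(x) - (σ(β) - β) x` is the conjugate of the gradient of the form; it satisfies
  -- `N ∘ N = d`, so that `p ± s N` multiply to `p² - d s² = -1`.
  let L (t x : F) : F := t * x + s * (2 * σ α * σ x - (σ β - β) * x)
  have hL : Function.LeftInverse (L (-p)) (L p) := fun x => by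
    simp only [L, map_add, map_mul, map_sub, map_ofNat, hσ _, hp, hs]
    linear_combination (-x) * hps
  have hL' : Function.LeftInverse (L p) (L (-p)) := fun x => by
    simp only [L, map_add, map_mul, map_sub, map_neg, map_ofNat, hσ _, hp, hs]
    linear_combination (-x) * hps
  refine ⟨⟨L p, L (-p), hL, hL'⟩, fun x => Subtype.ext ?_⟩
  change (skewForm σ α β (L p x) : F) = -(skewForm σ α β x : F)
  simp only [skewForm_apply, AddMonoidHom.coe_rangeRestrict]
  simp only [skewDiff_apply, L, map_add, map_mul, map_sub, map_pow, map_ofNat, hσ _, hp, hs]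
  linear_combination (σ α * σ x ^ 2 - α * x ^ 2 - (σ β - β) * (x * σ x)) * hps

theorem hasHyperbolicDouble_skewForm [Finite F] (hσ : Function.Involutive σ) (h2 : (2 : F) ≠ 0)
    {α β : F} (hΔ : 4 * (α * σ α) + (σ β - β) ^ 2 ≠ 0) :
    HasHyperbolicDouble (skewForm σ α β) where
  surjective_polarBilin x hx w := by
    obtain ⟨z, rfl⟩ := (skewDiff σ).rangeRestrict_surjective w
    have hgrad : skewFormGradient σ α β x ≠ 0 :=
      (map_ne_zero_iff _ (injective_skewFormGradient hσ hΔ)).mpr hx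
    refine ⟨z / skewFormGradient σ α β x, ?_⟩
    rw [QuadraticMap.polarBilin_apply_apply, polar_skewForm hσ, mul_div_cancel₀ z hgrad]
  exists_map_eq_neg := exists_skewForm_eq_neg hσ h2 hΔ

theorem card_skewDiff_affine_eq_zero [Finite F] (hσ : Function.Involutive σ) (h2 : (2 : F) ≠ 0)
    {α β : F} (hΔ : 4 * (α * σ α) + (σ β - β) ^ 2 ≠ 0) (m : ℕ) (a : Fin (2 * m) → F) (c : F) :
    ∃ δ : ℤ, (δ = 0 ∨ δ = 1) ∧
      (Nat.card (skewDiff σ).range : ℤ) * Nat.card {x : Fin (2 * m) → F //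
        skewDiff σ (∑ i, (α * x i ^ 2 - β * (x i * σ (x i))) + a ⬝ᵥ x + c) = 0} =
      Nat.card F ^ (2 * m) + Nat.card F ^ m * (δ * Nat.card (skewDiff σ).range - 1) := by
  classical
  let Q := skewForm σ α β
  have hsurj : Function.Surjective (skewFormGradient σ α β) :=
    Finite.surjective_of_injective (injective_skewFormGradient hσ hΔ)
  choose y hy using fun i => hsurj (a i)
  let w := -(skewDiff σ).rangeRestrict c
  have hiff (x : Fin (2 * m) → F) :
      skewDiff σ (∑ i, (α * x i ^ 2 - β * (x i * σ (x i))) + a ⬝ᵥ x + c) = 0 ↔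
        ∑ i, (Q (x i) + QuadraticMap.polar Q (y i) (x i)) = w := by
    simp only [Q, w, skewForm_apply, polar_skewForm hσ, hy, ← map_add, ← map_sum,
      eq_neg_iff_add_eq_zero, Subtype.ext_iff, AddMonoidHom.coe_rangeRestrict,
      Finset.sum_add_distrib, dotProduct, AddSubgroup.coe_zero]
  have hcard := card_sum_quadraticMap_eq (hasHyperbolicDouble_skewForm hσ h2 hΔ) m
    (w + ∑ i, Q (y i))
  rw [← card_sum_quadraticMap_add_polar_eq] at hcard
  refine ⟨if w + ∑ i, Q (y i) = 0 then 1 else 0, by split_ifs <;> simp, ?_⟩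
  simpa only [hiff, ite_mul, one_mul, zero_mul] using hcard

end SkewForm

section ProjectiveCounting

variable {F V : Type*} [Field F] [AddCommGroup V] [Module F V]

theorem card_projectivization_affine (l : Module.Dual F V) (A : V → Prop) :
    Nat.card {P : Projectivization F V // l P.rep ≠ 0 ∧ A ((l P.rep)⁻¹ • P.rep)} =
      Nat.card {v : V // l v = 1 ∧ A v} := by
  have hne (v : V) (hv : l v = 1) : v ≠ 0 := by
    rintro rfl
    simp at hv
  have hrep (v : V) (hv : l v = 1) : l (Projectivization.mk F v (hne v hv)).rep ≠ 0 ∧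
      (l (Projectivization.mk F v (hne v hv)).rep)⁻¹ • (Projectivization.mk F v (hne v hv)).rep =
        v := by
    obtain ⟨u, hu⟩ := Projectivization.exists_smul_eq_mk_rep F v (hne v hv)
    rw [← hu, Units.smul_def, map_smul, hv, smul_eq_mul, mul_one]
    exact ⟨u.ne_zero, inv_smul_smul₀ u.ne_zero v⟩
  refine Nat.card_congr
    { toFun := fun P => ⟨(l P.1.rep)⁻¹ • P.1.rep, by simp [P.2.1], P.2.2⟩
      invFun := fun v => ⟨Projectivization.mk F v.1 (hne v.1 v.2.1), (hrep v.1 v.2.1).1, by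
        rw [(hrep v.1 v.2.1).2]
        exact v.2.2⟩
      left_inv := fun P => Subtype.ext ?_
      right_inv := fun v => Subtype.ext (hrep v.1 v.2.1).2 }
  conv_rhs => rw [← P.1.mk_rep]
  exact (Projectivization.mk_eq_mk_iff' F _ _ _ _).mpr ⟨_, rfl⟩

theorem card_projectivization_cone_mul_add_one [Finite F] [Finite V] {C : V → Prop} (h0 : C 0)
    (hC : ∀ (u : Fˣ) (v : V), C v → C (u • v)) :
    Nat.card {P : Projectivization F V // C P.rep} * (Nat.card F - 1) + 1 =
      Nat.card {v // C v} := by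
  classical
  have hpunctured : Nat.card ({P : Projectivization F V // C P.rep} × Fˣ) =
      Nat.card {v // C v ∧ v ≠ 0} := by
    refine Nat.card_eq_of_bijective (fun p => ⟨p.2 • p.1.1.rep, hC _ _ p.1.2,
      (smul_ne_zero_iff_ne p.2).mpr p.1.1.rep_nonzero⟩) ⟨?_, ?_⟩
    · rintro ⟨⟨P, hP⟩, u⟩ ⟨⟨P', hP'⟩, u'⟩ h
      replace h : u • P.rep = u' • P'.rep := congrArg Subtype.val h
      obtain rfl : P = P' := by
        rw [← P.mk_rep, ← P'.mk_rep, Projectivization.mk_eq_mk_iff]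
        exact ⟨u⁻¹ * u', by rw [mul_smul, ← h, inv_smul_smul]⟩
      obtain rfl : u = u' := Units.ext (smul_left_injective F P.rep_nonzero h)
      rfl
    · rintro ⟨v, hCv, hv⟩
      obtain ⟨u, hu⟩ := Projectivization.exists_smul_eq_mk_rep F v hv
      refine ⟨⟨⟨Projectivization.mk F v hv, hu ▸ hC u v hCv⟩, u⁻¹⟩, Subtype.ext ?_⟩
      change u⁻¹ • (Projectivization.mk F v hv).rep = v
      rw [← hu, inv_smul_smul]
  rw [Nat.card_prod, Nat.card_units] at hpunctured
  rw [hpunctured]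
  change Set.ncard ({v | C v} \ {0}) + 1 = Set.ncard {v | C v}
  exact Set.ncard_sdiff_singleton_add_one h0

theorem card_projectivization_cone_eq [Finite F] [Finite V] {C : V → Prop} (h0 : C 0)
    (hC : ∀ (u : Fˣ) (v : V), C v → C (u • v)) {k d : ℕ}
    (hcard : Nat.card {v // C v} = Nat.card F ^ k + (Nat.card F - 1) * d) :
    Nat.card {P : Projectivization F V // C P.rep} = ∑ i ∈ Finset.range k, Nat.card F ^ i + d := by
  have hF : 0 < Nat.card F - 1 := Nat.sub_pos_of_lt Finite.one_lt_card
  have hgeom := geom_sum_mul_add (Nat.card F - 1) k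
  rw [Nat.sub_one_add_one Nat.card_pos.ne'] at hgeom
  have hcone := card_projectivization_cone_mul_add_one h0 hC
  rw [hcard] at hcone
  refine Nat.eq_of_mul_eq_mul_right hF ?_
  linarith

end ProjectiveCounting

section ConsSnoc

variable {F : Type*} {n : ℕ}

/-- The vector with first entry `c`, last entry `z` and the entries of `x` in between: homogeneous
coordinates adapted to the hypersurface, whose equations treat these three blocks separately. -/
def consSnoc (c : F) (x : Fin n → F) (z : F) : Fin (n + 1 + 1) → F :=
  Fin.cons c (Fin.snoc x z : Fin (n + 1) → F)

theorem exists_eq_consSnoc (v : Fin (n + 1 + 1) → F) : ∃ c x z, v = consSnoc c x z :=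
  ⟨v 0, Fin.init (Fin.tail v), Fin.tail v (Fin.last n), by simp [consSnoc]⟩

@[simp]
theorem consSnoc_zero (c : F) (x : Fin n → F) (z : F) : consSnoc c x z 0 = c :=
  rfl

@[simp]
theorem consSnoc_last (c : F) (x : Fin n → F) (z : F) :
    consSnoc c x z (Fin.last (n + 1)) = z := by
  simp [consSnoc, ← Fin.succ_last]

theorem consSnoc_zero_zero_zero [Zero F] : consSnoc 0 0 0 = (0 : Fin (n + 1 + 1) → F) := by
  ext i
  refine Fin.cases rfl (fun j => ?_) i
  refine Fin.lastCases ?_ (fun k => ?_) j <;> simp [consSnoc]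

theorem consSnoc_inj {c c' : F} {x x' : Fin n → F} {z z' : F} :
    consSnoc c x z = consSnoc c' x' z' ↔ c = c' ∧ x = x' ∧ z = z' := by
  simp [consSnoc, Fin.cons_inj, Fin.snoc_inj]

theorem card_subtype_consSnoc (c : F) (A : (Fin (n + 1 + 1) → F) → Prop) :
    Nat.card {v // v 0 = c ∧ A v} =
      Nat.card {p : (Fin n → F) × F // A (consSnoc c p.1 p.2)} := by
  refine (Nat.card_eq_of_bijective (fun p => ⟨consSnoc c p.1.1 p.1.2, by simp, p.2⟩) ⟨?_, ?_⟩).symm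
  · rintro ⟨⟨x, z⟩, hp⟩ ⟨⟨x', z'⟩, hp'⟩ h
    obtain ⟨-, rfl, rfl⟩ := consSnoc_inj.mp (congrArg Subtype.val h)
    rfl
  · rintro ⟨v, hv, hA⟩
    obtain ⟨c, x, z, rfl⟩ := exists_eq_consSnoc v
    obtain rfl : c = _ := hv
    exact ⟨⟨(x, z), hA⟩, rfl⟩

theorem sum_middle_consSnoc [AddCommMonoid F] (φ : F → F) (c : F) (x : Fin n → F) (z : F) :
    (∑ i : Fin (n + 1 + 1), if 1 ≤ i.1 ∧ i.1 < n + 1 then φ (consSnoc c x z i) else 0) =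
      ∑ i, φ (x i) := by
  rw [Fin.sum_univ_succ, Fin.sum_univ_castSucc]
  simp [consSnoc]

theorem consSnoc_dotProduct_consSnoc [NonUnitalNonAssocSemiring F] (c c' z z' : F)
    (x x' : Fin n → F) :
    consSnoc c x z ⬝ᵥ consSnoc c' x' z' = c * c' + x ⬝ᵥ x' + z * z' := by
  rw [dotProduct, Fin.sum_univ_succ, Fin.sum_univ_castSucc]
  simp [consSnoc, dotProduct, add_assoc]

end ConsSnoc

section Hypersurface

variable {F : Type*} [Field F] {n : ℕ}

/-- The affine points of the hypersurface in the hyperplane with coordinate vector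
`consSnoc c a b`, in the coordinates `(x₁, …, x_{r-1})` and `x_r`. The affine equation is written
with an involution `σ` in place of the `q`-power map. -/
def affinePart (σ : F →+* F) (α β c : F) (a : Fin n → F) (b : F) : Set ((Fin n → F) × F) :=
  {p | skewDiff σ (p.2 + ∑ i, (α * p.1 i ^ 2 - β * (p.1 i * σ (p.1 i)))) = 0 ∧
    c + a ⬝ᵥ p.1 + b * p.2 = 0}

/-- The points at infinity of the hypersurface in the hyperplane with coordinate vector `w`. -/
def infinitePart (w : Fin (n + 1 + 1) → F) : Set (Projectivization F (Fin (n + 1 + 1) → F)) :=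
  {P | P.rep 0 = 0 ∧ (∑ i : Fin (n + 1 + 1), if 1 ≤ i.1 ∧ i.1 < n + 1 then P.rep i ^ 2 else 0) = 0 ∧
    w ⬝ᵥ P.rep = 0}

theorem affEq_consSnoc_one_iff {q : ℕ} {σ : F →+* F} (hσ : Function.Involutive σ)
    (hσq : ∀ x, σ x = x ^ q) (α β : F) (x : Fin n → F) (z : F) :
    affEq q (n + 1) α β (consSnoc 1 x z) ↔
      skewDiff σ (z + ∑ i, (α * x i ^ 2 - β * (x i * σ (x i)))) = 0 := by
  have hsq (y : F) : y ^ (2 * q) = σ y ^ 2 := by rw [hσq, mul_comm, pow_mul]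
  have hnorm (y : F) : y ^ (q + 1) = y * σ y := by rw [hσq, pow_succ']
  have hcomm (y : F) : σ y * y = y * σ y := mul_comm _ _
  rw [affEq, sum_middle_consSnoc (· ^ (2 * q)), sum_middle_consSnoc (· ^ 2),
    sum_middle_consSnoc (· ^ (q + 1)), consSnoc_last, Finset.sum_sub_distrib, ← Finset.mul_sum,
    ← Finset.mul_sum]
  simp only [hsq, hnorm, ← hσq, skewDiff_apply, map_add, map_sub, map_mul, map_sum, map_pow, hσ _,
    hcomm]
  constructor <;> intro h <;> linear_combination h

theorem Bset_inter_eq_union (q : ℕ) (α β : F) (w : Fin (n + 1 + 1) → F) :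
    Bset F q (n + 1) α β ∩ {P | w ⬝ᵥ P.rep = 0} =
      {P | P.rep 0 ≠ 0 ∧ affEq q (n + 1) α β ((P.rep 0)⁻¹ • P.rep) ∧
        w ⬝ᵥ ((P.rep 0)⁻¹ • P.rep) = 0} ∪ infinitePart w := by
  ext P
  have hdiv : (fun i => P.rep i / P.rep 0) = (P.rep 0)⁻¹ • P.rep := by
    ext i
    simp [div_eq_inv_mul]
  simp only [Bset, infinitePart, Set.mem_inter_iff, Set.mem_union, Set.mem_ofPred_eq, hdiv,
    dotProduct_smul, smul_eq_mul]
  by_cases h : P.rep 0 = 0 <;> simp [h]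

theorem card_Bset_inter_eq [Finite F] {q : ℕ} {σ : F →+* F} (hσ : Function.Involutive σ)
    (hσq : ∀ x, σ x = x ^ q) (α β c : F) (a : Fin n → F) (b : F) :
    Nat.card ↥(Bset F q (n + 1) α β ∩ {P | consSnoc c a b ⬝ᵥ P.rep = 0}) =
      Nat.card (affinePart σ α β c a b) + Nat.card (infinitePart (consSnoc c a b)) := by
  have haffine := card_projectivization_affine (LinearMap.proj 0)
    fun v => affEq q (n + 1) α β v ∧ consSnoc c a b ⬝ᵥ v = 0
  simp only [LinearMap.proj_apply, card_subtype_consSnoc, affEq_consSnoc_one_iff hσ hσq,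
    consSnoc_dotProduct_consSnoc, mul_one] at haffine
  rw [Bset_inter_eq_union]
  refine (Set.ncard_union_eq ?_ (Set.toFinite _) (Set.toFinite _)).trans
    (congrArg (· + Nat.card (infinitePart (consSnoc c a b))) haffine)
  exact Set.disjoint_left.mpr fun P hP hP' => hP.1 hP'.1

theorem card_affinePart_of_last_eq_zero (σ : F →+* F) (α β c : F) (a : Fin n → F) :
    Nat.card (affinePart σ α β c a 0) =
      Nat.card {x // c + a ⬝ᵥ x = 0} * Nat.card (skewDiff σ).ker := by
  rw [← card_subtype_and_fst_add (fun x => c + a ⬝ᵥ x = 0) (· ∈ (skewDiff σ).ker)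
    fun x => ∑ i, (α * x i ^ 2 - β * (x i * σ (x i)))]
  simp only [affinePart, Set.coe_ofPred, zero_mul, add_zero, AddMonoidHom.mem_ker, and_comm]

theorem card_affinePart_of_last_ne_zero (σ : F →+* F) (α β c : F) (a : Fin n → F) {b : F}
    (hb : b ≠ 0) : Nat.card (affinePart σ α β c a b) =
      Nat.card {x : Fin n → F // skewDiff σ
        (∑ i, (α * x i ^ 2 - β * (x i * σ (x i))) + (-b⁻¹ • a) ⬝ᵥ x + -(c / b)) = 0} := by
  refine (card_subtype_and_add_mul_eq_zero (fun p : (Fin n → F) × F => skewDiff σ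
    (p.2 + ∑ i, (α * p.1 i ^ 2 - β * (p.1 i * σ (p.1 i)))) = 0) (c + a ⬝ᵥ ·) hb).trans ?_
  have hsubst (x : Fin n → F) (s : F) :
      -(c + a ⬝ᵥ x) / b + s = s + (-b⁻¹ • a) ⬝ᵥ x + -(c / b) := by
    rw [smul_dotProduct, smul_eq_mul]
    ring
  simp only [hsubst]

variable [Finite F]

theorem card_infinitePart_eq {c : F} {a : Fin n → F} {b : F} {k d : ℕ}
    (hcard : Nat.card {p : (Fin n → F) × F // ∑ i, p.1 i ^ 2 = 0 ∧ a ⬝ᵥ p.1 + b * p.2 = 0} =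
      Nat.card F ^ k + (Nat.card F - 1) * d) :
    Nat.card (infinitePart (consSnoc c a b)) = ∑ i ∈ Finset.range k, Nat.card F ^ i + d := by
  refine card_projectivization_cone_eq (C := fun v : Fin (n + 1 + 1) → F => v 0 = 0 ∧
    (∑ i, if 1 ≤ i.1 ∧ i.1 < n + 1 then v i ^ 2 else 0) = 0 ∧ consSnoc c a b ⬝ᵥ v = 0) ?_ ?_ ?_
  · simp
  · rintro u v ⟨h0, hsq, hw⟩
    refine ⟨by simp [h0], ?_, by rw [dotProduct_smul, hw, smul_zero]⟩
    simp only [Pi.smul_apply, smul_pow]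
    simp only [← smul_ite_zero, ← Finset.smul_sum, hsq, smul_zero]
  · rw [card_subtype_consSnoc, ← hcard]
    simp only [sum_middle_consSnoc (· ^ 2), consSnoc_dotProduct_consSnoc, mul_zero, zero_add]

theorem card_infinitePart_of_last_eq_zero {c : F} {a : Fin n → F} {k d : ℕ}
    (hcard : Nat.card {x : Fin n → F // ∑ i, x i ^ 2 = 0 ∧ a ⬝ᵥ x = 0} =
      Nat.card F ^ k + (Nat.card F - 1) * d) :
    Nat.card (infinitePart (consSnoc c a 0)) =
      ∑ i ∈ Finset.range (k + 1), Nat.card F ^ i + d * Nat.card F := by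
  refine card_infinitePart_eq ?_
  simp only [zero_mul, add_zero]
  rw [Nat.card_congr (Equiv.prodSubtypeFstEquivSubtypeProd
    (p := fun x : Fin n → F => ∑ i, x i ^ 2 = 0 ∧ a ⬝ᵥ x = 0)), Nat.card_prod, hcard]
  ring

theorem card_infinitePart_of_last_ne_zero {c : F} {a : Fin n → F} {b : F} (hb : b ≠ 0) {k d : ℕ}
    (hcard : Nat.card {x : Fin n → F // ∑ i, x i ^ 2 = 0} =
      Nat.card F ^ k + (Nat.card F - 1) * d) :
    Nat.card (infinitePart (consSnoc c a b)) = ∑ i ∈ Finset.range k, Nat.card F ^ i + d := by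
  refine card_infinitePart_eq ?_
  rw [card_subtype_and_add_mul_eq_zero
    (fun p : (Fin n → F) × F => ∑ i, p.1 i ^ 2 = 0) (a ⬝ᵥ ·) hb, hcard]

end Hypersurface

section Sizes

variable {F : Type*} [Field F] [Finite F] {q : ℕ}

theorem card_le_of_forall_pow_eq_self {n : ℕ} (hn : 1 < n) (h : ∀ x : F, x ^ n = x) :
    Nat.card F ≤ n := by
  cases nonempty_fintype F
  have hunits (x : Fˣ) : x ^ (n - 1) = 1 := by
    rw [← mul_eq_right (b := x), pow_sub_one_mul (by lia)]
    exact Units.ext (h x)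
  have hdvd := (FiniteField.forall_pow_eq_one_iff F (n - 1)).mp hunits
  have hle := Nat.le_of_dvd (Nat.sub_pos_of_lt hn) hdvd
  rw [Nat.card_eq_fintype_card]
  lia

theorem exists_involutive_ringHom_eq_pow (hF : Nat.card F = q ^ 2) :
    ∃ σ : F →+* F, Function.Involutive σ ∧ (∀ x, σ x = x ^ q) ∧ σ ≠ RingHom.id F := by
  cases nonempty_fintype F
  rw [Nat.card_eq_fintype_card] at hF
  obtain ⟨p, k, hp, -, rfl⟩ : IsPrimePow q :=
    (isPrimePow_pow_iff two_ne_zero).mp (hF ▸ Fintype.isPrimePow_card_of_field)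
  rw [← Nat.prime_iff] at hp
  have hp0 : (p : F) = 0 := by
    have h := FiniteField.cast_card_eq_zero F
    rw [hF, ← pow_mul, Nat.cast_pow] at h
    exact eq_zero_of_pow_eq_zero h
  have := Fact.mk hp
  have := ringChar.of_eq (CharP.ringChar_of_prime_eq_zero hp hp0)
  refine ⟨iterateFrobenius F p k, fun x => ?_, iterateFrobenius_def p k, fun h => ?_⟩
  · rw [iterateFrobenius_def, iterateFrobenius_def, ← pow_mul, ← sq, ← hF, FiniteField.pow_card]
  · have hq : 1 < p ^ k := (Nat.one_lt_pow_iff two_ne_zero).mp (hF ▸ Fintype.one_lt_card)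
    have hle : Nat.card F ≤ p ^ k := card_le_of_forall_pow_eq_self hq fun x => by
      rw [← iterateFrobenius_def p k, h, RingHom.id_apply]
    rw [Nat.card_eq_fintype_card, hF] at hle
    exact hle.not_gt (lt_self_pow₀ hq one_lt_two)

theorem two_ne_zero_of_odd_card (hF : Odd (Nat.card F)) : (2 : F) ≠ 0 := by
  cases nonempty_fintype F
  intro h2
  have hchar : ringChar F = 2 := CharP.ringChar_of_prime_eq_zero Nat.prime_two (mod_cast h2)
  rw [Nat.card_eq_fintype_card, Nat.odd_iff, FiniteField.even_card_of_char_two hchar] at hF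
  exact zero_ne_one hF

theorem isSquare_neg_one_of_card_eq_sq (hF : Nat.card F = q ^ 2) : IsSquare (-1 : F) := by
  cases nonempty_fintype F
  rw [FiniteField.isSquare_neg_one_iff, ← Nat.card_eq_fintype_card, hF, Nat.pow_mod]
  have := Nat.mod_lt q four_pos
  interval_cases q % 4 <;> norm_num

variable (hF : Nat.card F = q ^ 2) (hq : Odd q) {m : ℕ} (α β : F)
include hF hq

theorem card_Bset : Nat.card (Bset F q (2 * (m + 1) + 1) α β) =
    q ^ (4 * m + 5) + q ^ (2 * m + 2) + ∑ i ∈ Finset.range (2 * m + 2), (q ^ 2) ^ i := by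
  obtain ⟨σ, hσ, hσq, hne⟩ := exists_involutive_ringHom_eq_pow hF
  have h2 : (2 : F) ≠ 0 := two_ne_zero_of_odd_card (hF ▸ hq.pow)
  have hquadric := card_sum_sq_eq_zero h2 (isSquare_neg_one_of_card_eq_sq hF) m
  have hall : Bset F q (2 * (m + 1) + 1) α β =
      Bset F q (2 * (m + 1) + 1) α β ∩ {P | consSnoc 0 0 0 ⬝ᵥ P.rep = 0} := by
    simp [consSnoc_zero_zero_zero]
  rw [hall, card_Bset_inter_eq hσ hσq, card_affinePart_of_last_eq_zero,
    card_infinitePart_of_last_eq_zero (by simpa using hquadric),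
    card_ker_skewDiff_of_card_eq_sq hσ h2 hne hF]
  have haffine : Nat.card {x : Fin (2 * (m + 1)) → F // 0 + 0 ⬝ᵥ x = 0} =
      Nat.card F ^ (2 * (m + 1)) := by
    rw [Nat.card_congr (Equiv.subtypeUnivEquiv fun x => by simp), Nat.card_fun, Nat.card_fin]
  rw [haffine, hF]
  ring

theorem card_Bset_inter_infinity {c : F} (hc : c ≠ 0) :
    Nat.card ↥(Bset F q (2 * (m + 1) + 1) α β ∩ {P | consSnoc c 0 0 ⬝ᵥ P.rep = 0}) =
      q ^ (2 * m + 2) + ∑ i ∈ Finset.range (2 * m + 2), (q ^ 2) ^ i := by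
  obtain ⟨σ, hσ, hσq, -⟩ := exists_involutive_ringHom_eq_pow hF
  have h2 : (2 : F) ≠ 0 := two_ne_zero_of_odd_card (hF ▸ hq.pow)
  have hquadric := card_sum_sq_eq_zero h2 (isSquare_neg_one_of_card_eq_sq hF) m
  rw [card_Bset_inter_eq hσ hσq, card_affinePart_of_last_eq_zero,
    card_infinitePart_of_last_eq_zero (by simpa using hquadric)]
  simp only [zero_dotProduct, add_zero, hc, Nat.card_of_isEmpty, hF]
  ring

theorem card_Bset_inter_of_last_eq_zero (c : F) {a : Fin (2 * (m + 1)) → F} (ha : a ≠ 0) :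
    ∃ δ : ℕ, (δ = 0 ∨ δ = 1) ∧
      Nat.card ↥(Bset F q (2 * (m + 1) + 1) α β ∩ {P | consSnoc c a 0 ⬝ᵥ P.rep = 0}) =
        q ^ (4 * m + 3) + δ * q ^ (2 * m + 2) + ∑ i ∈ Finset.range (2 * m + 1), (q ^ 2) ^ i := by
  classical
  obtain ⟨σ, hσ, hσq, hne⟩ := exists_involutive_ringHom_eq_pow hF
  have h2 : (2 : F) ≠ 0 := two_ne_zero_of_odd_card (hF ▸ hq.pow)
  have hlin : Nat.card {x // c + a ⬝ᵥ x = 0} = Nat.card F ^ (2 * m + 1) := by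
    refine Nat.eq_of_mul_eq_mul_right (Nat.card_pos (α := F)) ?_
    have hcard := card_dotProduct_eq_mul_card ha (-c)
    simp only [eq_neg_iff_add_eq_zero, Fintype.card_fin] at hcard
    simp only [add_comm c, hcard, mul_add_one, pow_succ]
  have hquadric := card_sum_sq_eq_zero_and_dotProduct_eq_zero h2
    (isSquare_neg_one_of_card_eq_sq hF) ha
  rw [card_Bset_inter_eq hσ hσq, card_affinePart_of_last_eq_zero,
    card_infinitePart_of_last_eq_zero hquadric, card_ker_skewDiff_of_card_eq_sq hσ h2 hne hF,
    hlin, hF]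
  refine ⟨if a ⬝ᵥ a = 0 then 1 else 0, by split_ifs <;> simp, ?_⟩
  split_ifs <;> ring

theorem card_Bset_inter_of_last_ne_zero {α β : F}
    (hΔ : 4 * α ^ (q + 1) + (β ^ q - β) ^ 2 ≠ 0) (c : F)
    (a : Fin (2 * (m + 1)) → F) {b : F} (hb : b ≠ 0) :
    ∃ δ : ℕ, (δ = 0 ∨ δ = 1) ∧
      Nat.card ↥(Bset F q (2 * (m + 1) + 1) α β ∩ {P | consSnoc c a b ⬝ᵥ P.rep = 0}) =
        q ^ (4 * m + 3) + δ * q ^ (2 * m + 2) - q ^ (2 * m + 1) + q ^ (2 * m) +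
          ∑ i ∈ Finset.range (2 * m + 1), (q ^ 2) ^ i := by
  obtain ⟨σ, hσ, hσq, hne⟩ := exists_involutive_ringHom_eq_pow hF
  have h2 : (2 : F) ≠ 0 := two_ne_zero_of_odd_card (hF ▸ hq.pow)
  have hquadric := card_sum_sq_eq_zero h2 (isSquare_neg_one_of_card_eq_sq hF) m
  rw [pow_succ', ← hσq, ← hσq] at hΔ
  obtain ⟨δ, hδ, haffine⟩ := card_skewDiff_affine_eq_zero hσ h2 hΔ (m + 1) (-b⁻¹ • a) (-(c / b))
  have hrange : Nat.card (skewDiff σ).range = q :=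
    (card_ker_skewDiff hσ h2 hne).symm.trans (card_ker_skewDiff_of_card_eq_sq hσ h2 hne hF)
  have hq0 : (q : ℤ) ≠ 0 := mod_cast hq.pos.ne'
  have hle : q ^ (2 * m + 1) ≤ q ^ (4 * m + 3) := Nat.pow_le_pow_right hq.pos (by lia)
  rw [← card_affinePart_of_last_ne_zero σ α β c a hb, hrange, hF] at haffine
  rw [card_Bset_inter_eq hσ hσq, card_infinitePart_of_last_ne_zero hb hquadric, hF]
  lift δ to ℕ using by lia
  refine ⟨δ, by exact_mod_cast hδ, ?_⟩
  suffices h : Nat.card (affinePart σ α β c a b) + q ^ (2 * m + 1) =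
      q ^ (4 * m + 3) + δ * q ^ (2 * m + 2) by
    rw [← h]
    ring_nf
    lia
  zify
  refine mul_left_cancel₀ hq0 ?_
  push_cast at haffine
  linear_combination haffine

theorem card_Bset_inter_mem {α β : F} (hΔ : 4 * α ^ (q + 1) + (β ^ q - β) ^ 2 ≠ 0)
    {f : Module.Dual F (Fin (2 * (m + 1) + 1 + 1) → F)} (hf : f ≠ 0) :
    Nat.card ↥(Bset F q (2 * (m + 1) + 1) α β ∩ {P | f P.rep = 0}) ∈
      ({q ^ (2 * m + 2) + ∑ i ∈ Finset.range (2 * m + 2), (q ^ 2) ^ i,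
        q ^ (4 * m + 3) - q ^ (2 * m + 1) + q ^ (2 * m) +
          ∑ i ∈ Finset.range (2 * m + 1), (q ^ 2) ^ i,
        q ^ (4 * m + 3) + ∑ i ∈ Finset.range (2 * m + 1), (q ^ 2) ^ i,
        q ^ (4 * m + 3) + q ^ (2 * m + 2) - q ^ (2 * m + 1) + q ^ (2 * m) +
          ∑ i ∈ Finset.range (2 * m + 1), (q ^ 2) ^ i,
        q ^ (4 * m + 3) + q ^ (2 * m + 2) + ∑ i ∈ Finset.range (2 * m + 1), (q ^ 2) ^ i} :
          Set ℕ) := by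
  obtain ⟨w, rfl⟩ := (dotProductEquiv F _).surjective f
  obtain ⟨c, a, b, rfl⟩ := exists_eq_consSnoc w
  simp only [dotProductEquiv_apply_apply]
  by_cases hb : b = 0
  · subst hb
    by_cases ha : a = 0
    · subst ha
      have hc : c ≠ 0 := by
        rintro rfl
        exact hf (by rw [consSnoc_zero_zero_zero, map_zero])
      simp [card_Bset_inter_infinity hF hq α β hc]
    · obtain ⟨δ, rfl | rfl, hcard⟩ := card_Bset_inter_of_last_eq_zero hF hq α β c ha <;>
        simp [hcard]
  · obtain ⟨δ, rfl | rfl, hcard⟩ := card_Bset_inter_of_last_ne_zero hF hq hΔ c a hb <;>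
      simp [hcard]

end Sizes

theorem pow_succ_sub_div_add_one {a : ℕ} (ha : 2 ≤ a) (k : ℕ) :
    (a ^ (k + 1) - a) / (a - 1) + 1 = ∑ i ∈ Finset.range (k + 1), a ^ i := by
  have hgeom := Nat.geomSum_eq ha k
  have hfactor : a ^ (k + 1) - a = a * (a ^ k - 1) := by rw [Nat.mul_sub, pow_succ', mul_one]
  rw [geom_sum_succ, hgeom, hfactor, Nat.mul_div_assoc _ (Nat.sub_one_dvd_pow_sub_one a k)]

theorem statement2_general (q r : ℕ) (hqodd : Odd q)
    (hr : 3 ≤ r) (hrodd : Odd r)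
    (F : Type*) [Field F] [Finite F] (hF : Nat.card F = q ^ 2)
    (α β : F) (hcond : 4 * α ^ (q + 1) + (β ^ q - β) ^ 2 ≠ 0) :
    Nat.card ↥(Bset F q r α β) =
        q ^ (2 * r - 1) + q ^ (r - 1) + (q ^ (2 * (r - 1)) - q ^ 2) / (q ^ 2 - 1) + 1 ∧
    ∀ f : Module.Dual F (Fin (r + 1) → F), f ≠ 0 →
      Nat.card ↥(Bset F q r α β ∩ {P | f P.rep = 0}) ∈
        ({q ^ 2 * ((q ^ (2 * (r - 2)) - 1) / (q ^ 2 - 1)) + q ^ (r - 1) + 1,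
          q ^ (2 * r - 3) - q ^ (r - 2) + q ^ (r - 3) + (q ^ (2 * (r - 2)) - 1) / (q ^ 2 - 1),
          q ^ (2 * r - 3) + (q ^ (2 * (r - 2)) - q ^ 2) / (q ^ 2 - 1) + 1,
          q ^ (2 * r - 3) + q ^ (r - 1) - q ^ (r - 2) + q ^ (r - 3)
            + (q ^ (2 * (r - 2)) - 1) / (q ^ 2 - 1),
          q ^ (2 * r - 3) + q ^ (r - 1) + (q ^ (2 * (r - 2)) - q ^ 2) / (q ^ 2 - 1) + 1}
          : Set ℕ) := by
  obtain ⟨m, rfl⟩ : ∃ m, r = 2 * (m + 1) + 1 := ⟨(r - 3) / 2, by grind⟩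
  have hq2 : 2 ≤ q ^ 2 := hF ▸ Finite.one_lt_card
  have hgeom (k : ℕ) : (q ^ (2 * k) - 1) / (q ^ 2 - 1) = ∑ i ∈ Finset.range k, (q ^ 2) ^ i := by
    rw [pow_mul, Nat.geomSum_eq hq2]
  have hgeom_add_one (s k : ℕ) : s + (q ^ (2 * (k + 1)) - q ^ 2) / (q ^ 2 - 1) + 1 =
      s + ∑ i ∈ Finset.range (k + 1), (q ^ 2) ^ i := by
    rw [pow_mul, add_assoc, pow_succ_sub_div_add_one hq2]
  have hgeom_succ (s k : ℕ) : q ^ 2 * ∑ i ∈ Finset.range k, (q ^ 2) ^ i + s + 1 =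
      s + ∑ i ∈ Finset.range (k + 1), (q ^ 2) ^ i := by
    rw [geom_sum_succ]
    ring
  simp only [show 2 * (2 * (m + 1) + 1) - 1 = 4 * m + 5 by lia,
    show 2 * (2 * (m + 1) + 1) - 3 = 4 * m + 3 by lia,
    show 2 * (m + 1) + 1 - 1 = 2 * m + 1 + 1 by lia, show 2 * (m + 1) + 1 - 2 = 2 * m + 1 by lia,
    show 2 * (m + 1) + 1 - 3 = 2 * m by lia, hgeom, hgeom_add_one, hgeom_succ]
  exact ⟨card_Bset hF hqodd α β, fun f hf => card_Bset_inter_mem hF hqodd hcond hf⟩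

/-- size and hyperplane intersection numbers of `B` for `q` odd and
`r ≥ 3` odd, with `4α^{q+1} + (β^q−β)² ≠ 0`. -/
theorem statement2 (q r : ℕ) (hq : IsPrimePow q) (hqodd : Odd q)
    (hr : 3 ≤ r) (hrodd : Odd r)
    (F : Type) [Field F] [Fintype F] (hF : Fintype.card F = q ^ 2)
    (α β : F) (hα : α ≠ 0) (hβ : β ^ q ≠ β)
    (hcond : 4 * α ^ (q + 1) + (β ^ q - β) ^ 2 ≠ 0) :
    Nat.card ↥(Bset F q r α β) =
        q ^ (2 * r - 1) + q ^ (r - 1) + (q ^ (2 * (r - 1)) - q ^ 2) / (q ^ 2 - 1) + 1 ∧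
    ∀ f : Module.Dual F (Fin (r + 1) → F), f ≠ 0 →
      Nat.card ↥(Bset F q r α β ∩ {P | f P.rep = 0}) ∈
        ({q ^ 2 * ((q ^ (2 * (r - 2)) - 1) / (q ^ 2 - 1)) + q ^ (r - 1) + 1,
          q ^ (2 * r - 3) - q ^ (r - 2) + q ^ (r - 3) + (q ^ (2 * (r - 2)) - 1) / (q ^ 2 - 1),
          q ^ (2 * r - 3) + (q ^ (2 * (r - 2)) - q ^ 2) / (q ^ 2 - 1) + 1,
          q ^ (2 * r - 3) + q ^ (r - 1) - q ^ (r - 2) + q ^ (r - 3)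
            + (q ^ (2 * (r - 2)) - 1) / (q ^ 2 - 1),
          q ^ (2 * r - 3) + q ^ (r - 1) + (q ^ (2 * (r - 2)) - q ^ 2) / (q ^ 2 - 1) + 1}
          : Set ℕ) :=
  statement2_general q r hqodd hr hrodd F (Nat.card_eq_fintype_card.trans hF) α β hcond
end
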